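/- Let (a_k)_{k≥1} be a sequence of complex numbers such that Σ_{k≥1} k·log(k+1)·|a_k| < ∞, Σ_{k≥1} a_k = 0, and Σ_{k≥1} (−1)^k a_k = 0. Then Σ_{n≥1} n · | Σ_{k≥1, k−n odd} a_k (1/(n+k) + 1/(n−k)) | < ∞. -/

import Mathlib

/-!
For `k` and `n` of different parity, `n (1/(n+k) + 1/(n-k)) = 2 + 2k² / (n² - k²)`. The constant `2`
contributes nothing, because the two cancellation conditions say that the even-indexed and the
odd-indexed coefficients both sum to zero. What remains is bounded by
`∑ₖ k ‖aₖ‖ · 2k / |n² - k²|`, and by partial fractions `∑ₙ 2k / |n² - k²|` is at most a constant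
times the harmonic number `H₂ₖ`, hence `O(log (k + 1))`. Tonelli's theorem concludes.
-/

open Finset

lemma harmonic_mono : Monotone harmonic :=
  monotone_nat_of_le_succ fun n => by
    rw [harmonic_succ]
    exact le_add_of_nonneg_right (by positivity)

lemma sum_range_inv_add_one_eq_harmonic (N : ℕ) :
    ∑ j ∈ range N, ((j : ℝ) + 1)⁻¹ = harmonic N := by
  simp [harmonic]

lemma sum_range_inv_add_eq_harmonic_sub (m N : ℕ) :
    ∑ j ∈ range N, ((m : ℝ) + j + 1)⁻¹ = harmonic (m + N) - harmonic m := by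
  induction N with
  | zero => simp
  | succ N ih =>
    rw [sum_range_succ, ih, ← add_assoc, harmonic_succ]
    push_cast
    ring

lemma sum_range_inv_sub_eq_harmonic (k : ℕ) :
    ∑ n ∈ range k, ((k : ℝ) - n)⁻¹ = harmonic k := by
  rw [← sum_range_inv_add_one_eq_harmonic, ← sum_range_reflect]
  refine sum_congr rfl fun n hn => ?_
  have hindex : k = n + 1 + (k - 1 - n) := by grind
  have hcast : (k : ℝ) - (k - 1 - n : ℕ) = n + 1 := sub_eq_iff_eq_add.2 (mod_cast hindex)
  rw [hcast]

lemma one_le_two_mul_log_add_one {k : ℕ} (hk : 1 ≤ k) : 1 ≤ 2 * Real.log (k + 1) := by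
  have hk' : (1 : ℝ) ≤ k := mod_cast hk
  have hlog : Real.log 2 ≤ Real.log (k + 1) := Real.log_le_log two_pos (by linarith)
  linarith [Real.log_two_gt_d9]

lemma harmonic_two_mul_le_four_mul_log_add_one (k : ℕ) :
    (harmonic (2 * k) : ℝ) ≤ 4 * Real.log (k + 1) := by
  rcases k.eq_zero_or_pos with rfl | hk
  · simp
  have hlog : Real.log (2 * k : ℕ) ≤ 2 * Real.log (k + 1) := by
    rw [← Nat.cast_two (R := ℝ), ← Real.log_pow]
    refine Real.log_le_log (by positivity) ?_
    push_cast
    nlinarith [sq_nonneg (k : ℝ)]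
  linarith [harmonic_le_one_add_log (2 * k), one_le_two_mul_log_add_one hk]

/-- The kernel `2k / |n² - k²|` that is left of the even discrete Hilbert transform after the
cancellation. It vanishes on the diagonal, thanks to the convention `x / 0 = 0`. -/
noncomputable def remainderKernel (k n : ℕ) : ℝ :=
  2 * k / |(n : ℝ) ^ 2 - k ^ 2|

namespace remainderKernel

lemma nonneg (k n : ℕ) : 0 ≤ remainderKernel k n := by
  unfold remainderKernel
  positivity

lemma self (k : ℕ) : remainderKernel k k = 0 := by
  simp [remainderKernel]

lemma le_of_lt {k n : ℕ} (h : n < k) : remainderKernel k n ≤ 2 * ((k : ℝ) - n)⁻¹ := by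
  have hgap : 0 < (k : ℝ) - n := sub_pos.2 (mod_cast h)
  have habs : |(n : ℝ) ^ 2 - k ^ 2| = (k - n) * (k + n) := by
    rw [abs_sub_comm, abs_of_nonneg] <;> nlinarith
  rw [remainderKernel, habs, ← div_eq_mul_inv, div_le_div_iff₀ (by nlinarith) hgap]
  nlinarith [mul_nonneg hgap.le n.cast_nonneg]

lemma add_one_add (k j : ℕ) :
    remainderKernel k (k + 1 + j) = ((j : ℝ) + 1)⁻¹ - ((2 * k : ℕ) + j + 1 : ℝ)⁻¹ := by
  have hfactor : ((k + 1 + j : ℕ) : ℝ) ^ 2 - k ^ 2 = (j + 1) * (2 * k + j + 1) := by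
    push_cast
    ring
  rw [remainderKernel, hfactor, abs_of_nonneg (by positivity)]
  push_cast
  field_simp
  ring

lemma sum_range_self_le (k : ℕ) : ∑ n ∈ range k, remainderKernel k n ≤ 2 * harmonic k := by
  rw [← sum_range_inv_sub_eq_harmonic, mul_sum]
  exact sum_le_sum fun n hn => le_of_lt (mem_range.1 hn)

lemma sum_range_add_one_add_le (k N : ℕ) :
    ∑ j ∈ range N, remainderKernel k (k + 1 + j) ≤ harmonic (2 * k) := by
  have hmono : (harmonic N : ℝ) ≤ harmonic (2 * k + N) :=
    mod_cast harmonic_mono (Nat.le_add_left N (2 * k))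
  simp only [add_one_add, sum_sub_distrib, sum_range_inv_add_one_eq_harmonic,
    sum_range_inv_add_eq_harmonic_sub]
  linarith

lemma sum_range_le (k N : ℕ) :
    ∑ n ∈ range N, remainderKernel k n ≤ 12 * Real.log (k + 1) := by
  have hmono : (harmonic k : ℝ) ≤ harmonic (2 * k) := mod_cast harmonic_mono (by lia)
  calc ∑ n ∈ range N, remainderKernel k n
      ≤ ∑ n ∈ range (k + 1 + N), remainderKernel k n :=
        sum_le_sum_of_subset_of_nonneg (by simp) fun n _ _ => nonneg k n
    _ = ∑ n ∈ range k, remainderKernel k n + ∑ j ∈ range N, remainderKernel k (k + 1 + j) := by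
        rw [sum_range_add, sum_range_succ, self, add_zero]
    _ ≤ 2 * harmonic k + harmonic (2 * k) :=
        add_le_add (sum_range_self_le k) (sum_range_add_one_add_le k N)
    _ ≤ 12 * Real.log (k + 1) := by linarith [harmonic_two_mul_le_four_mul_log_add_one k]

lemma summable (k : ℕ) : Summable (remainderKernel k) :=
  summable_of_sum_range_le (nonneg k) (sum_range_le k)

lemma tsum_le (k : ℕ) : ∑' n, remainderKernel k n ≤ 12 * Real.log (k + 1) :=
  Real.tsum_le_of_sum_range_le (nonneg k) (sum_range_le k)

lemma summable_prod_weighted {w : ℕ → ℝ} (hw : ∀ k, 0 ≤ w k)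
    (hsum : Summable fun k : ℕ => w k * Real.log (k + 1)) :
    Summable fun p : ℕ × ℕ => w p.2 * remainderKernel p.2 p.1 := by
  have hnonneg : ∀ k n, 0 ≤ w k * remainderKernel k n := fun k n => mul_nonneg (hw k) (nonneg k n)
  have hprod : Summable fun p : ℕ × ℕ => w p.1 * remainderKernel p.1 p.2 := by
    refine (summable_prod_of_nonneg fun p => hnonneg p.1 p.2).2
      ⟨fun k => (summable k).mul_left (w k), ?_⟩
    refine .of_nonneg_of_le (fun k => tsum_nonneg (hnonneg k)) (fun k => ?_) (hsum.mul_left 12)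
    calc ∑' n, w k * remainderKernel k n = w k * ∑' n, remainderKernel k n := tsum_mul_left
      _ ≤ w k * (12 * Real.log (k + 1)) := mul_le_mul_of_nonneg_left (tsum_le k) (hw k)
      _ = 12 * (w k * Real.log (k + 1)) := by ring
  exact hprod.prod_symm

end remainderKernel

lemma mul_one_div_add_add_one_div_sub {K : Type*} [Field K] {x y : K}
    (hadd : x + y ≠ 0) (hsub : x - y ≠ 0) :
    x * (1 / (x + y) + 1 / (x - y)) = 2 + 2 * y ^ 2 / (x ^ 2 - y ^ 2) := by
  rw [sq_sub_sq]
  field_simp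
  ring

lemma ite_odd_add_eq_half_smul {E : Type*} [AddCommGroup E] [Module ℝ E] (k n : ℕ) (x : E) :
    (if Odd (k + n) then x else 0) = (1 / 2 : ℝ) • (x - (-1 : ℝ) ^ n • (-1 : ℝ) ^ k • x) := by
  rw [smul_smul, ← pow_add, add_comm n k]
  split_ifs with hodd
  · rw [hodd.neg_one_pow]
    module
  · rw [(Nat.not_odd_iff_even.1 hodd).neg_one_pow]
    module

lemma hasSum_ite_odd_add_zero {E : Type*} [AddCommGroup E] [Module ℝ E] [TopologicalSpace E]
    [IsTopologicalAddGroup E] [ContinuousConstSMul ℝ E] {a : ℕ → E} (hsum : HasSum a 0)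
    (halt : HasSum (fun k => (-1 : ℝ) ^ k • a k) 0) (n : ℕ) :
    HasSum (fun k => if Odd (k + n) then a k else 0) 0 := by
  simp only [ite_odd_add_eq_half_smul]
  simpa using (hsum.sub (halt.const_smul ((-1 : ℝ) ^ n))).const_smul (1 / 2 : ℝ)

lemma tsum_eq_tsum_succ_of_zero {M : Type*} [AddCommMonoid M] [TopologicalSpace M] {f : ℕ → M}
    (hf : f 0 = 0) : ∑' k, f k = ∑' k, f (k + 1) := by
  refine ((add_left_injective 1).tsum_eq fun k hk => ?_).symm
  exact ⟨k - 1, Nat.sub_add_cancel (Nat.one_le_iff_ne_zero.2 fun h => hk (h ▸ hf))⟩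

lemma summable_of_summable_mul_log_mul_norm {E : Type*} [NormedAddCommGroup E]
    [CompleteSpace E] {a : ℕ → E}
    (ha : Summable fun k : ℕ => (k : ℝ) * Real.log (k + 1) * ‖a k‖) : Summable a := by
  refine (ha.mul_left 2).of_norm_bounded_eventually_nat ?_
  filter_upwards [Filter.eventually_ge_atTop 1] with k hk
  have hweight : 1 ≤ (k : ℝ) * (2 * Real.log (k + 1)) :=
    one_le_mul_of_one_le_of_one_le (mod_cast hk) (one_le_two_mul_log_add_one hk)
  calc ‖a k‖ ≤ (k * (2 * Real.log (k + 1))) * ‖a k‖ :=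
        le_mul_of_one_le_left (norm_nonneg _) hweight
    _ = 2 * (k * Real.log (k + 1) * ‖a k‖) := by ring

section HilbertTransform

variable {E : Type*} [NormedAddCommGroup E] [NormedSpace ℝ E]

/-- The `n`-th value of the halved even discrete Hilbert transform of `a`. The parity condition
excludes `k = n`, so no denominator vanishes. -/
noncomputable def evenHilbert (a : ℕ → E) (n : ℕ) : E :=
  ∑' k : ℕ, if Odd (k + n) then (1 / ((n : ℝ) + k) + 1 / ((n : ℝ) - k)) • a k else 0

/-- The `k`-th term of `n` times the halved even discrete Hilbert transform of `a`, without the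
part `2 • a k` that the cancellation conditions remove. -/
noncomputable def hilbertRemainder (a : ℕ → E) (n k : ℕ) : E :=
  if Odd (k + n) then (2 * (k : ℝ) ^ 2 / ((n : ℝ) ^ 2 - k ^ 2)) • a k else 0

lemma norm_hilbertRemainder_le (a : ℕ → E) (n k : ℕ) :
    ‖hilbertRemainder a n k‖ ≤ k * ‖a k‖ * remainderKernel k n := by
  unfold hilbertRemainder
  split_ifs
  · rw [norm_smul, norm_div, Real.norm_of_nonneg (by positivity), Real.norm_eq_abs,
      remainderKernel]
    exact le_of_eq (by ring)
  · simpa using mul_nonneg (by positivity) (remainderKernel.nonneg k n)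

lemma smul_ite_odd_eq_add_hilbertRemainder (a : ℕ → E) (n k : ℕ) :
    (n : ℝ) • (if Odd (k + n) then (1 / ((n : ℝ) + k) + 1 / ((n : ℝ) - k)) • a k else 0) =
      (2 : ℝ) • (if Odd (k + n) then a k else 0) + hilbertRemainder a n k := by
  unfold hilbertRemainder
  split_ifs with hodd
  · have hadd : (n : ℝ) + k ≠ 0 := by
      rw [add_comm]
      exact mod_cast hodd.pos.ne'
    have hsub : (n : ℝ) - k ≠ 0 := sub_ne_zero.2 (mod_cast (Nat.ne_of_odd_add hodd).symm)
    rw [smul_smul, mul_one_div_add_add_one_div_sub hadd hsub, add_smul]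
  · simp

lemma smul_evenHilbert_eq_tsum_hilbertRemainder {a : ℕ → E} (hsum : HasSum a 0)
    (halt : HasSum (fun k => (-1 : ℝ) ^ k • a k) 0) {n : ℕ}
    (hrem : Summable (hilbertRemainder a n)) :
    (n : ℝ) • evenHilbert a n = ∑' k, hilbertRemainder a n k := by
  have hconst := (hasSum_ite_odd_add_zero hsum halt n).const_smul (2 : ℝ)
  rw [evenHilbert, ← tsum_const_smul'']
  simp only [smul_ite_odd_eq_add_hilbertRemainder]
  rw [hconst.summable.tsum_add hrem, hconst.tsum_eq, smul_zero, zero_add]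

theorem stmt_19_general [CompleteSpace E] {a : ℕ → E}
    (ha : Summable fun k : ℕ => (k : ℝ) * Real.log (k + 1) * ‖a k‖)
    (hsum : ∑' k, a k = 0) (halt : ∑' k, (-1 : ℝ) ^ k • a k = 0) :
    Summable fun n : ℕ => (n : ℝ) * ‖evenHilbert a n‖ := by
  have hsum' : HasSum a 0 := hsum ▸ (summable_of_summable_mul_log_mul_norm ha).hasSum
  have halt' : HasSum (fun k => (-1 : ℝ) ^ k • a k) 0 :=
    halt ▸ (summable_of_summable_mul_log_mul_norm (by simpa [norm_smul] using ha)).hasSum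
  have hmajorant := remainderKernel.summable_prod_weighted (w := fun k => k * ‖a k‖)
    (fun k => by positivity) (by simpa only [mul_right_comm] using ha)
  refine .of_nonneg_of_le (fun n => by positivity) (fun n => ?_) hmajorant.prod
  have hrow := hmajorant.prod_factor n
  have hrem := hrow.of_norm_bounded (norm_hilbertRemainder_le a n)
  calc (n : ℝ) * ‖evenHilbert a n‖ = ‖(n : ℝ) • evenHilbert a n‖ := by simp [norm_smul]
    _ = ‖∑' k, hilbertRemainder a n k‖ := by
        rw [smul_evenHilbert_eq_tsum_hilbertRemainder hsum' halt' hrem]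
    _ ≤ ∑' k, k * ‖a k‖ * remainderKernel k n :=
        tsum_of_norm_bounded hrow.hasSum (norm_hilbertRemainder_le a n)

end HilbertTransform

/-- weighted summability of the halved even discrete Hilbert
transform under the logarithmic weight condition and the two cancellation
conditions (`f(0) = 0` and `f(π) = 0` for the cosine series). -/
theorem stmt_19 (a : ℕ → ℂ)
    (ha : Summable fun k : ℕ => ((k : ℝ) + 1) * Real.log ((k : ℝ) + 2) * ‖a (k + 1)‖)
    (h0 : ∑' k : ℕ, a (k + 1) = 0)
    (hpi : ∑' k : ℕ, (-1 : ℂ) ^ (k + 1) * a (k + 1) = 0) :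
    Summable fun n : ℕ => ((n : ℝ) + 1) *
      ‖∑' k : ℕ, if 1 ≤ k ∧ Odd (k + (n + 1)) then
        a k * (1 / (((n : ℂ) + 1) + k) + 1 / (((n : ℂ) + 1) - k)) else 0‖ := by
  have hgeneral := stmt_19_general (a := Function.update a 0 0)
    ((summable_nat_add_iff 1).1 (by simpa [add_assoc, one_add_one_eq_two] using ha))
    (by rw [tsum_eq_tsum_succ_of_zero (by simp)]; simpa using h0)
    (by rw [tsum_eq_tsum_succ_of_zero (by simp)]; simpa using hpi)
  refine ((summable_nat_add_iff 1).2 hgeneral).congr fun n => ?_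
  rw [evenHilbert, Nat.cast_succ]
  congr! 4 with k
  rcases k with _ | k <;> simp [mul_comm]
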